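/- Let Φ and Ψ be a pair of complementary N-functions. Then there exist positive constants C and b such that ∫_{ℝⁿ} Φ(b M_f(z)) dz ≤ C ∫_{ℝⁿ} Φ(|f(z)|) dz for all f ∈ L*_Φ if and only if Ψ satisfies the Δ₂-condition on [0,∞). -/

import Mathlib

open Real MeasureTheory intervalIntegral

/-!
By duality through Young's inequality (with equality for matching arguments), `Δ₂` for `Ψ` is the
`∇₂`-condition `2 l Φ(t) ≤ Φ(l t)` for some `l > 1`.

If `Φ` is `∇₂`, then `Φ(t) / t` decays geometrically along `t / lᵏ`, hence
`∫₀ᵗ φ(s) / s ds ≤ 2 l Φ(t) / t`. Splitting `f` at height `s` turns the weak-type `(1, 1)` bound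
into `s |{M f > 2 s}| ≤ D ∫_{|f| > s} |f|`; integrating it against `φ(s) / s ds` gives the modular
inequality.

Conversely, for the indicator of the unit ball `B` multiplied by `t`, the maximal function is at
least `t / τ` on a ball of measure `τ |B|`. Integrating over the levels produces a factor
`∫ du / u`, and the resulting inequality `b l log (b l) Φ(s) ≤ C Φ(l s)` is `∇₂` once `l` is large.
-/

open Set Filter Metric
open scoped NNReal ENNReal Topology

/-! ### N-functions and complementary densities -/

/-- The N-function `Φ(t) = ∫₀ᵗ φ` with density `φ`. -/
noncomputable def nFunction (φ : ℝ → ℝ) (t : ℝ) : ℝ := ∫ s in (0 : ℝ)..t, φ s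

/-- The density `ψ` of the N-function complementary to the one with density `φ`: the generalized
right inverse of `φ` on `[0, ∞)`. It vanishes where the set is empty, that is, for `t` below the
values of `φ`. -/
noncomputable def complementaryDensity (φ : ℝ → ℝ) (t : ℝ) : ℝ := sSup {s | 0 ≤ s ∧ φ s ≤ t}

/-- The `Δ₂`-condition on `[0, ∞)`. -/
def DeltaTwo (Ψ : ℝ → ℝ) : Prop := ∃ K > (0 : ℝ), ∀ t ≥ (0 : ℝ), Ψ (2 * t) ≤ K * Ψ t

/-- The `∇₂`-condition on `[0, ∞)`, which is dual to `Δ₂`. -/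
def NablaTwo (Φ : ℝ → ℝ) : Prop := ∃ l > (1 : ℝ), ∀ t ≥ (0 : ℝ), 2 * l * Φ t ≤ Φ (l * t)

lemma setLIntegral_Ioi_eq_Ioc {g : ℝ → ℝ≥0∞} {a t : ℝ} (hat : a ≤ t) (hg : ∀ x, t < x → g x = 0) :
    ∫⁻ x in Ioi a, g x = ∫⁻ x in Ioc a t, g x := by
  rw [← Ioc_union_Ioi_eq_Ioi hat, lintegral_union measurableSet_Ioi (Ioc_disjoint_Ioi le_rfl),
    setLIntegral_eq_zero measurableSet_Ioi hg, add_zero]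

section Density

variable {φ : ℝ → ℝ}

lemma nonneg_of_monotoneOn_Ici (hφ : MonotoneOn φ (Ici 0)) (hφ₀ : 0 ≤ φ 0) {x : ℝ} (hx : 0 ≤ x) :
    0 ≤ φ x :=
  hφ₀.trans (hφ self_mem_Ici hx hx)

lemma aemeasurable_Ioi_of_monotoneOn_Ici (hφ : MonotoneOn φ (Ici 0)) :
    AEMeasurable φ (volume.restrict (Ioi 0)) :=
  aemeasurable_restrict_of_monotoneOn measurableSet_Ioi (hφ.mono Ioi_subset_Ici_self)

lemma intervalIntegrable_of_monotoneOn_Ici (hφ : MonotoneOn φ (Ici 0)) {t : ℝ} (ht : 0 ≤ t) :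
    IntervalIntegrable φ volume 0 t :=
  (hφ.mono (by rw [uIcc_of_le ht]; exact Icc_subset_Ici_self)).intervalIntegrable

lemma nFunction_zero : nFunction φ 0 = 0 := integral_same

lemma nFunction_nonneg (hφ : MonotoneOn φ (Ici 0)) (hφ₀ : 0 ≤ φ 0) {t : ℝ} (ht : 0 ≤ t) :
    0 ≤ nFunction φ t :=
  integral_nonneg ht fun _ hs => nonneg_of_monotoneOn_Ici hφ hφ₀ hs.1

lemma nFunction_le_mul (hφ : MonotoneOn φ (Ici 0)) {s u : ℝ} (hs : 0 ≤ s) (hsu : s ≤ u) :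
    nFunction φ s ≤ s * φ u := by
  calc nFunction φ s ≤ ∫ _ in (0 : ℝ)..s, φ u :=
        integral_mono_on hs (intervalIntegrable_of_monotoneOn_Ici hφ hs) intervalIntegrable_const
          fun x hx => hφ hx.1 (hs.trans hsu) (hx.2.trans hsu)
    _ = s * φ u := by simp

lemma ofReal_nFunction (hφ : MonotoneOn φ (Ici 0)) (hφ₀ : 0 ≤ φ 0) {t : ℝ} (ht : 0 ≤ t) :
    ENNReal.ofReal (nFunction φ t) = ∫⁻ s in Ioc 0 t, ENNReal.ofReal (φ s) := by
  rw [nFunction, integral_of_le ht, ofReal_integral_eq_lintegral_ofReal]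
  · exact (intervalIntegrable_iff_integrableOn_Ioc_of_le ht).1
      (intervalIntegrable_of_monotoneOn_Ici hφ ht)
  · exact ae_restrict_of_forall_mem measurableSet_Ioc
      fun s hs => nonneg_of_monotoneOn_Ici hφ hφ₀ hs.1.le

lemma complementaryDensity_nonneg (t : ℝ) : 0 ≤ complementaryDensity φ t :=
  Real.sSup_nonneg fun _ hs => hs.1

lemma complementaryDensity_of_neg (hφ : MonotoneOn φ (Ici 0)) (hφ₀ : 0 ≤ φ 0) {t : ℝ}
    (ht : t < 0) : complementaryDensity φ t = 0 :=
  le_antisymm (Real.sSup_nonpos fun _ hs => absurd (hs.2.trans_lt ht)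
    (nonneg_of_monotoneOn_Ici hφ hφ₀ hs.1).not_gt) (complementaryDensity_nonneg t)

lemma le_complementaryDensity (hφ_top : Tendsto φ atTop atTop) {x y : ℝ} (hx : 0 ≤ x)
    (h : φ x ≤ y) : x ≤ complementaryDensity φ y := by
  obtain ⟨B, hB⟩ := eventually_atTop.1 (hφ_top.eventually_gt_atTop y)
  refine le_csSup ⟨B, fun s hs => ?_⟩ ⟨hx, h⟩
  by_contra! hBs
  exact (hB s hBs.le).not_ge hs.2

lemma monotone_complementaryDensity (hφ_top : Tendsto φ atTop atTop) :
    Monotone (complementaryDensity φ) := fun _ _ hab =>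
  Real.sSup_le (fun _ hs => le_complementaryDensity hφ_top hs.1 (hs.2.trans hab))
    (complementaryDensity_nonneg _)

lemma le_of_lt_complementaryDensity (hφ : MonotoneOn φ (Ici 0)) {x y : ℝ} (hx : 0 ≤ x)
    (h : x < complementaryDensity φ y) : φ x ≤ y := by
  contrapose! h
  refine Real.sSup_le (fun s hs => ?_) hx
  by_contra! hxs
  exact (h.trans_le (hφ hx hs.1 hxs.le)).not_ge hs.2

lemma volume_Ioi_inter_le_eq_complementaryDensity (hφ : MonotoneOn φ (Ici 0))
    (hφ_top : Tendsto φ atTop atTop) (y : ℝ) :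
    volume (Ioi 0 ∩ {x | φ x ≤ y}) = ENNReal.ofReal (complementaryDensity φ y) := by
  apply le_antisymm
  · calc volume (Ioi 0 ∩ {x | φ x ≤ y}) ≤ volume (Ioc 0 (complementaryDensity φ y)) :=
          measure_mono fun x hx => ⟨hx.1, le_complementaryDensity hφ_top (le_of_lt hx.1) hx.2⟩
      _ = ENNReal.ofReal (complementaryDensity φ y) := by simp
  · calc ENNReal.ofReal (complementaryDensity φ y)
        = volume (Ioo 0 (complementaryDensity φ y)) := by simp
      _ ≤ volume (Ioi 0 ∩ {x | φ x ≤ y}) :=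
          measure_mono fun x hx => ⟨hx.1, le_of_lt_complementaryDensity hφ hx.1.le hx.2⟩

-- Both sides are the area of `{(x, y) | 0 < x, φ x ≤ y ≤ s}`.
lemma ofReal_nFunction_complementaryDensity (hφ : MonotoneOn φ (Ici 0)) (hφ₀ : 0 ≤ φ 0)
    (hφ_top : Tendsto φ atTop atTop) {s : ℝ} (hs : 0 ≤ s) :
    ENNReal.ofReal (nFunction (complementaryDensity φ) s)
      = ∫⁻ x in Ioi 0, ENNReal.ofReal (s - φ x) := by
  set ψ := complementaryDensity φ
  have hψ : Monotone ψ := monotone_complementaryDensity hφ_top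
  have volume_superlevel : ∀ t ∈ Ioi (0 : ℝ),
      ENNReal.ofReal (ψ (s - t)) = volume.restrict (Ioi 0) {x | t ≤ max (s - φ x) 0} := by
    intro t ht
    have h_set : {x | t ≤ max (s - φ x) 0} = {x | φ x ≤ s - t} := by
      ext x
      simp only [mem_ofPred_eq, le_max_iff, (mem_Ioi.1 ht).not_ge, or_false]
      exact le_sub_comm
    rw [h_set, Measure.restrict_apply' measurableSet_Ioi, inter_comm,
      volume_Ioi_inter_le_eq_complementaryDensity hφ hφ_top]
  calc ENNReal.ofReal (nFunction ψ s)
      = ENNReal.ofReal (∫ t in (0 : ℝ)..s, ψ (s - t)) := by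
        rw [integral_comp_sub_left, sub_self, sub_zero, nFunction]
    _ = ∫⁻ t in Ioc 0 s, ENNReal.ofReal (ψ (s - t)) := by
        rw [integral_of_le hs, ofReal_integral_eq_lintegral_ofReal]
        · exact ((hψ.comp_antitone fun _ _ h => sub_le_sub_left h s).antitoneOn
            _).intervalIntegrable.1
        · exact Eventually.of_forall fun t => complementaryDensity_nonneg _
    _ = ∫⁻ t in Ioi 0, ENNReal.ofReal (ψ (s - t)) :=
        (setLIntegral_Ioi_eq_Ioc hs fun t hst => by
          have hψ_neg : ψ (s - t) = 0 := complementaryDensity_of_neg hφ hφ₀ (sub_neg.2 hst)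
          rw [hψ_neg, ENNReal.ofReal_zero]).symm
    _ = ∫⁻ t in Ioi 0, volume.restrict (Ioi 0) {x | t ≤ max (s - φ x) 0} :=
        setLIntegral_congr_fun measurableSet_Ioi volume_superlevel
    _ = ∫⁻ x in Ioi 0, ENNReal.ofReal (max (s - φ x) 0) :=
        (lintegral_eq_lintegral_meas_le _ (Eventually.of_forall fun _ => le_max_right _ _)
          ((aemeasurable_const.sub (aemeasurable_Ioi_of_monotoneOn_Ici hφ)).max
            aemeasurable_const)).symm
    _ = ∫⁻ x in Ioi 0, ENNReal.ofReal (s - φ x) := by simp [ENNReal.ofReal_max]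

theorem mul_le_nFunction_add_nFunction (hφ : MonotoneOn φ (Ici 0)) (hφ₀ : 0 ≤ φ 0)
    (hφ_top : Tendsto φ atTop atTop) {s t : ℝ} (hs : 0 ≤ s) (ht : 0 ≤ t) :
    t * s ≤ nFunction φ t + nFunction (complementaryDensity φ) s := by
  have hΦ := nFunction_nonneg hφ hφ₀ ht
  have hΨ : 0 ≤ nFunction (complementaryDensity φ) s :=
    integral_nonneg hs fun _ _ => complementaryDensity_nonneg _
  rw [← ENNReal.ofReal_le_ofReal_iff (add_nonneg hΦ hΨ)]
  calc ENNReal.ofReal (t * s) = ∫⁻ _ in Ioc 0 t, ENNReal.ofReal s := by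
        simp [ENNReal.ofReal_mul ht, mul_comm (ENNReal.ofReal s)]
    _ ≤ ∫⁻ x in Ioc 0 t, (ENNReal.ofReal (φ x) + ENNReal.ofReal (s - φ x)) :=
        lintegral_mono fun x => by
          simpa only [add_sub_cancel] using ENNReal.ofReal_add_le (p := φ x) (q := s - φ x)
    _ = (∫⁻ x in Ioc 0 t, ENNReal.ofReal (φ x)) + ∫⁻ x in Ioc 0 t, ENNReal.ofReal (s - φ x) :=
        lintegral_add_left' ((aemeasurable_Ioi_of_monotoneOn_Ici hφ).mono_set
          Ioc_subset_Ioi_self).ennreal_ofReal _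
    _ ≤ (∫⁻ x in Ioc 0 t, ENNReal.ofReal (φ x)) + ∫⁻ x in Ioi 0, ENNReal.ofReal (s - φ x) := by
        gcongr
        exact Ioc_subset_Ioi_self
    _ = ENNReal.ofReal (nFunction φ t + nFunction (complementaryDensity φ) s) := by
        rw [ENNReal.ofReal_add hΦ hΨ, ofReal_nFunction hφ hφ₀ ht,
          ofReal_nFunction_complementaryDensity hφ hφ₀ hφ_top hs]

theorem nFunction_add_nFunction_eq_mul (hφ : MonotoneOn φ (Ici 0)) (hφ₀ : 0 ≤ φ 0)
    (hφ_top : Tendsto φ atTop atTop) {s t : ℝ} (hs : 0 ≤ s) (ht : 0 ≤ t)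
    (hle : ∀ x, 0 ≤ x → x < t → φ x ≤ s) (hge : ∀ x, t < x → s ≤ φ x) :
    nFunction φ t + nFunction (complementaryDensity φ) s = t * s := by
  have hΦ := nFunction_nonneg hφ hφ₀ ht
  have hΨ : 0 ≤ nFunction (complementaryDensity φ) s :=
    integral_nonneg hs fun _ _ => complementaryDensity_nonneg _
  rw [← ENNReal.ofReal_eq_ofReal_iff (add_nonneg hΦ hΨ) (mul_nonneg ht hs)]
  calc ENNReal.ofReal (nFunction φ t + nFunction (complementaryDensity φ) s)
      = (∫⁻ x in Ioo 0 t, ENNReal.ofReal (φ x)) + ∫⁻ x in Ioo 0 t, ENNReal.ofReal (s - φ x) := by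
        rw [ENNReal.ofReal_add hΦ hΨ, ofReal_nFunction hφ hφ₀ ht,
          ofReal_nFunction_complementaryDensity hφ hφ₀ hφ_top hs, setLIntegral_Ioi_eq_Ioc ht
            fun x hx => ENNReal.ofReal_of_nonpos (sub_nonpos.2 (hge x hx)),
          restrict_Ioo_eq_restrict_Ioc]
    _ = ∫⁻ x in Ioo 0 t, (ENNReal.ofReal (φ x) + ENNReal.ofReal (s - φ x)) :=
        (lintegral_add_left' ((aemeasurable_Ioi_of_monotoneOn_Ici hφ).mono_set
          Ioo_subset_Ioi_self).ennreal_ofReal _).symm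
    _ = ∫⁻ _ in Ioo 0 t, ENNReal.ofReal s :=
        setLIntegral_congr_fun measurableSet_Ioo fun x hx => by
          rw [← ENNReal.ofReal_add (nonneg_of_monotoneOn_Ici hφ hφ₀ hx.1.le)
            (sub_nonneg.2 (hle x hx.1.le hx.2)), add_sub_cancel]
    _ = ENNReal.ofReal (t * s) := by
        simp [ENNReal.ofReal_mul ht, mul_comm (ENNReal.ofReal s)]

theorem nablaTwo_nFunction_of_deltaTwo (hφ : MonotoneOn φ (Ici 0)) (hφ₀ : 0 ≤ φ 0)
    (hφ_top : Tendsto φ atTop atTop) (h : DeltaTwo (nFunction (complementaryDensity φ))) :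
    NablaTwo (nFunction φ) := by
  obtain ⟨K, -, hK⟩ := h
  set Ψ := nFunction (complementaryDensity φ)
  obtain ⟨l, hl, hKl⟩ : ∃ l : ℝ, 1 < l ∧ K ≤ 2 * l :=
    ⟨max K 2, by simp, by linarith [le_max_left K 2, le_max_right K 2]⟩
  refine ⟨l, hl, fun t ht => ?_⟩
  set s := φ t
  have hs : 0 ≤ s := nonneg_of_monotoneOn_Ici hφ hφ₀ ht
  have young_eq : nFunction φ t + Ψ s = t * s :=
    nFunction_add_nFunction_eq_mul hφ hφ₀ hφ_top hs ht (fun x hx hxt => hφ hx ht hxt.le)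
      fun x htx => hφ ht (ht.trans htx.le) htx.le
  have young_le : l * t * (2 * s) ≤ nFunction φ (l * t) + Ψ (2 * s) :=
    mul_le_nFunction_add_nFunction hφ hφ₀ hφ_top (by positivity) (by positivity)
  have hΨ : 0 ≤ Ψ s := integral_nonneg hs fun _ _ => complementaryDensity_nonneg _
  have hΨ_double : Ψ (2 * s) ≤ 2 * l * Ψ s := (hK s hs).trans (by gcongr)
  linear_combination young_le + hΨ_double + 2 * l * young_eq

theorem deltaTwo_of_nablaTwo_nFunction (hφ : MonotoneOn φ (Ici 0)) (hφ₀ : 0 ≤ φ 0)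
    (hφ_top : Tendsto φ atTop atTop) (h : NablaTwo (nFunction φ)) :
    DeltaTwo (nFunction (complementaryDensity φ)) := by
  obtain ⟨l, hl, hN⟩ := h
  set Ψ := nFunction (complementaryDensity φ)
  refine ⟨2 * l, by positivity, fun s hs => ?_⟩
  set u := complementaryDensity φ (2 * s)
  have hu : 0 ≤ u := complementaryDensity_nonneg _
  have young_eq : nFunction φ u + Ψ (2 * s) = u * (2 * s) :=
    nFunction_add_nFunction_eq_mul hφ hφ₀ hφ_top (by positivity) hu
      (fun x hx hxu => le_of_lt_complementaryDensity hφ hx hxu) fun x hux => by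
        by_contra! hlt
        exact hux.not_ge (le_complementaryDensity hφ_top (hu.trans hux.le) hlt.le)
  have young_le : u / l * s ≤ nFunction φ (u / l) + Ψ s :=
    mul_le_nFunction_add_nFunction hφ hφ₀ hφ_top hs (by positivity)
  have hΦ_scale : 2 * l * nFunction φ (u / l) ≤ nFunction φ u := by
    simpa only [mul_div_cancel₀ u (by positivity : l ≠ 0)] using hN (u / l) (by positivity)
  calc Ψ (2 * s) = 2 * l * (u / l * s) - nFunction φ u := by
        field_simp
        linear_combination young_eq
    _ ≤ 2 * l * (nFunction φ (u / l) + Ψ s) - nFunction φ u := by gcongr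
    _ ≤ 2 * l * Ψ s := by linear_combination hΦ_scale

theorem deltaTwo_iff_nablaTwo_nFunction (hφ : MonotoneOn φ (Ici 0)) (hφ₀ : 0 ≤ φ 0)
    (hφ_top : Tendsto φ atTop atTop) :
    DeltaTwo (nFunction (complementaryDensity φ)) ↔ NablaTwo (nFunction φ) :=
  ⟨nablaTwo_nFunction_of_deltaTwo hφ hφ₀ hφ_top, deltaTwo_of_nablaTwo_nFunction hφ hφ₀ hφ_top⟩

end Density

/-! ### Interpolation between distribution functions and N-functions -/

section Interpolation

variable {φ : ℝ → ℝ}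

lemma pow_mul_apply_div_pow_le {Φ : ℝ → ℝ} {l : ℝ} (hl : 0 < l)
    (hN : ∀ t ≥ (0 : ℝ), 2 * l * Φ t ≤ Φ (l * t)) {t : ℝ} (ht : 0 ≤ t) (k : ℕ) :
    (2 * l) ^ k * Φ (t / l ^ k) ≤ Φ t := by
  induction k with
  | zero => simp
  | succ k ih =>
    have h_step : l * (t / l ^ (k + 1)) = t / l ^ k := by
      rw [pow_succ]
      field_simp
    calc (2 * l) ^ (k + 1) * Φ (t / l ^ (k + 1))
        = (2 * l) ^ k * (2 * l * Φ (t / l ^ (k + 1))) := by ring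
      _ ≤ (2 * l) ^ k * Φ (t / l ^ k) := by
          rw [← h_step]
          gcongr
          exact hN _ (by positivity)
      _ ≤ Φ t := ih

lemma setLIntegral_Ioc_div_le (hφ : MonotoneOn φ (Ici 0)) (hφ₀ : 0 ≤ φ 0) {a t : ℝ} (ha : 0 < a)
    (ht : 0 ≤ t) :
    ∫⁻ s in Ioc a t, ENNReal.ofReal (φ s / s) ≤ ENNReal.ofReal (nFunction φ t / a) := by
  calc ∫⁻ s in Ioc a t, ENNReal.ofReal (φ s / s)
      ≤ ∫⁻ s in Ioc a t, ENNReal.ofReal a⁻¹ * ENNReal.ofReal (φ s) := by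
        refine setLIntegral_mono' measurableSet_Ioc fun s hs => ?_
        rw [← ENNReal.ofReal_mul (by positivity), div_eq_inv_mul]
        have := nonneg_of_monotoneOn_Ici hφ hφ₀ (ha.le.trans hs.1.le)
        have := hs.1
        gcongr
    _ = ENNReal.ofReal a⁻¹ * ∫⁻ s in Ioc a t, ENNReal.ofReal (φ s) :=
        lintegral_const_mul' _ _ ENNReal.ofReal_ne_top
    _ ≤ ENNReal.ofReal a⁻¹ * ∫⁻ s in Ioc 0 t, ENNReal.ofReal (φ s) := by gcongr
    _ = ENNReal.ofReal (nFunction φ t / a) := by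
        rw [← ofReal_nFunction hφ hφ₀ ht, ← ENNReal.ofReal_mul (by positivity), div_eq_inv_mul]

lemma Ioc_subset_iUnion_Ioc_div_pow {l : ℝ} (hl : 1 < l) (t : ℝ) :
    Ioc 0 t ⊆ ⋃ k : ℕ, Ioc (t / l ^ (k + 1)) (t / l ^ k) := by
  intro s hs
  obtain ⟨k, hk, hk'⟩ := exists_nat_pow_near ((one_le_div hs.1).2 hs.2) hl
  rw [le_div_iff₀ hs.1] at hk
  rw [div_lt_iff₀ hs.1] at hk'
  refine mem_iUnion.2 ⟨k, ?_, ?_⟩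
  · rwa [div_lt_iff₀' (by positivity)]
  · rwa [le_div_iff₀' (by positivity)]

-- The dyadic pieces of the integral decay geometrically, since `∇₂` makes `Φ(t) / t` decay.
lemma setLIntegral_div_le_of_nablaTwo (hφ : MonotoneOn φ (Ici 0)) (hφ₀ : 0 ≤ φ 0) {l : ℝ}
    (hl : 1 < l) (hN : ∀ t ≥ (0 : ℝ), 2 * l * nFunction φ t ≤ nFunction φ (l * t)) {t : ℝ}
    (ht : 0 < t) :
    ∫⁻ s in Ioc 0 t, ENNReal.ofReal (φ s / s) ≤ ENNReal.ofReal (2 * l * nFunction φ t / t) := by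
  set Φ := nFunction φ
  have hΦ : 0 ≤ Φ t := nFunction_nonneg hφ hφ₀ ht.le
  have piece_le : ∀ k : ℕ, ∫⁻ s in Ioc (t / l ^ (k + 1)) (t / l ^ k), ENNReal.ofReal (φ s / s) ≤
      ENNReal.ofReal (l * Φ t / t * (1 / 2) ^ k) := fun k =>
    (setLIntegral_Ioc_div_le hφ hφ₀ (by positivity) (by positivity)).trans <|
      ENNReal.ofReal_le_ofReal <| calc
        Φ (t / l ^ k) / (t / l ^ (k + 1))
          = l / t * (1 / 2) ^ k * ((2 * l) ^ k * Φ (t / l ^ k)) := by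
            rw [mul_pow, div_pow, one_pow]
            field_simp
            ring
        _ ≤ l / t * (1 / 2) ^ k * Φ t := by
            gcongr
            exact pow_mul_apply_div_pow_le (by positivity) hN ht.le k
        _ = l * Φ t / t * (1 / 2) ^ k := by ring
  calc ∫⁻ s in Ioc 0 t, ENNReal.ofReal (φ s / s)
      ≤ ∫⁻ s in ⋃ k : ℕ, Ioc (t / l ^ (k + 1)) (t / l ^ k), ENNReal.ofReal (φ s / s) :=
        lintegral_mono_set (Ioc_subset_iUnion_Ioc_div_pow hl t)
    _ ≤ ∑' k : ℕ, ∫⁻ s in Ioc (t / l ^ (k + 1)) (t / l ^ k), ENNReal.ofReal (φ s / s) :=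
        lintegral_iUnion_le _ _
    _ ≤ ∑' k : ℕ, ENNReal.ofReal (l * Φ t / t * (1 / 2) ^ k) := ENNReal.tsum_le_tsum piece_le
    _ = ENNReal.ofReal (∑' k : ℕ, l * Φ t / t * (1 / 2) ^ k) :=
        (ENNReal.ofReal_tsum_of_nonneg (fun k => by positivity)
          (summable_geometric_two.mul_left _)).symm
    _ = ENNReal.ofReal (2 * l * Φ t / t) := by
        rw [tsum_mul_left, tsum_geometric_two]
        ring_nf

variable {α β : Type*} [MeasurableSpace α] [MeasurableSpace β] {μ : Measure α} {ν : Measure β}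

lemma lintegral_ofReal_nFunction_eq_lintegral_meas_le (hφ : MonotoneOn φ (Ici 0)) (hφ₀ : 0 ≤ φ 0)
    {F : α → ℝ} (hF : AEMeasurable F μ) (hF₀ : 0 ≤ F) :
    ∫⁻ x, ENNReal.ofReal (nFunction φ (F x)) ∂μ
      = ∫⁻ t in Ioi 0, μ {x | t ≤ F x} * ENNReal.ofReal (φ t) :=
  lintegral_comp_eq_lintegral_meas_le_mul μ (Eventually.of_forall hF₀) hF
    (fun _ ht => intervalIntegrable_of_monotoneOn_Ici hφ (le_of_lt ht))
    (ae_restrict_of_forall_mem measurableSet_Ioi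
      fun _ ht => nonneg_of_monotoneOn_Ici hφ hφ₀ (le_of_lt ht))

lemma lintegral_ofReal_nFunction_eq_lintegral_meas_lt (hφ : MonotoneOn φ (Ici 0)) (hφ₀ : 0 ≤ φ 0)
    {F : α → ℝ} (hF : AEMeasurable F μ) (hF₀ : 0 ≤ F) :
    ∫⁻ x, ENNReal.ofReal (nFunction φ (F x)) ∂μ
      = ∫⁻ t in Ioi 0, μ {x | t < F x} * ENNReal.ofReal (φ t) :=
  lintegral_comp_eq_lintegral_meas_lt_mul μ (Eventually.of_forall hF₀) hF
    (fun _ ht => intervalIntegrable_of_monotoneOn_Ici hφ (le_of_lt ht))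
    (ae_restrict_of_forall_mem measurableSet_Ioi
      fun _ ht => nonneg_of_monotoneOn_Ici hφ hφ₀ (le_of_lt ht))

lemma lintegral_Ioi_mul_setLIntegral_lt [SFinite ν] {w : ℝ → ℝ≥0∞}
    (hw : AEMeasurable w (volume.restrict (Ioi 0))) {g : β → ℝ} (hg : Measurable g) {h : β → ℝ≥0∞}
    (hh : Measurable h) :
    ∫⁻ t in Ioi 0, w t * ∫⁻ y in {y | t < g y}, h y ∂ν
      = ∫⁻ y, h y * (∫⁻ t in Ioo 0 (g y), w t) ∂ν := by
  have hs : MeasurableSet {p : ℝ × β | p.1 < g p.2} :=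
    measurableSet_lt measurable_fst (hg.comp measurable_snd)
  calc ∫⁻ t in Ioi 0, w t * ∫⁻ y in {y | t < g y}, h y ∂ν
      = ∫⁻ t in Ioi 0, ∫⁻ y, {p : ℝ × β | p.1 < g p.2}.indicator
          (fun p => w p.1 * h p.2) (t, y) ∂ν := by
        refine lintegral_congr fun t => ?_
        rw [← lintegral_const_mul _ hh,
          ← lintegral_indicator (measurableSet_lt measurable_const hg)]
        rfl
    _ = ∫⁻ y, (∫⁻ t in Ioi 0, {p : ℝ × β | p.1 < g p.2}.indicator
          (fun p => w p.1 * h p.2) (t, y)) ∂ν :=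
        lintegral_lintegral_swap
          ((hw.comp_fst.mul (hh.comp measurable_snd).aemeasurable).indicator hs)
    _ = ∫⁻ y, h y * (∫⁻ t in Ioo 0 (g y), w t) ∂ν := by
        refine lintegral_congr fun y => ?_
        have hw_y : AEMeasurable w (volume.restrict (Ioo 0 (g y))) :=
          hw.mono_set Ioo_subset_Ioi_self
        rw [← lintegral_const_mul'' _ hw_y, ← Iio_inter_Ioi, ← setLIntegral_indicator
          measurableSet_Iio]
        refine lintegral_congr fun t => ?_
        simp only [indicator, mem_ofPred_eq, mem_Iio, mul_comm]

theorem lintegral_nFunction_le_of_weakType [SFinite ν] (hφ : MonotoneOn φ (Ici 0)) (hφ₀ : 0 ≤ φ 0)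
    {F : α → ℝ} (hF : AEMeasurable F μ) (hF₀ : 0 ≤ F) {g : β → ℝ} (hg : Measurable g)
    (hg₀ : 0 ≤ g) {A : ℝ≥0} {K : ℝ} (hK : 0 ≤ K)
    (hFg : ∀ t > 0, ENNReal.ofReal t * μ {x | t < F x}
      ≤ A * ∫⁻ y in {y | t < g y}, ENNReal.ofReal (g y) ∂ν)
    (hφ_div : ∀ t > 0, ∫⁻ s in Ioc 0 t, ENNReal.ofReal (φ s / s)
      ≤ ENNReal.ofReal (K * nFunction φ t / t)) :
    ∫⁻ x, ENNReal.ofReal (nFunction φ (F x)) ∂μ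
      ≤ A * (ENNReal.ofReal K * ∫⁻ y, ENNReal.ofReal (nFunction φ (g y)) ∂ν) := by
  have hw : AEMeasurable (fun t => ENNReal.ofReal (φ t / t)) (volume.restrict (Ioi 0)) :=
    ((aemeasurable_Ioi_of_monotoneOn_Ici hφ).div aemeasurable_id).ennreal_ofReal
  have hw_lt : ∀ y, ENNReal.ofReal (g y) * ∫⁻ t in Ioo 0 (g y), ENNReal.ofReal (φ t / t)
      ≤ ENNReal.ofReal K * ENNReal.ofReal (nFunction φ (g y)) := by
    intro y
    rcases (hg₀ y).eq_or_lt with h_zero | h_pos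
    · simp [← h_zero]
    · calc ENNReal.ofReal (g y) * ∫⁻ t in Ioo 0 (g y), ENNReal.ofReal (φ t / t)
          ≤ ENNReal.ofReal (g y) * ENNReal.ofReal (K * nFunction φ (g y) / g y) := by
            rw [restrict_Ioo_eq_restrict_Ioc]
            gcongr
            exact hφ_div _ h_pos
        _ = ENNReal.ofReal K * ENNReal.ofReal (nFunction φ (g y)) := by
            rw [← ENNReal.ofReal_mul h_pos.le, ← ENNReal.ofReal_mul hK,
              mul_div_cancel₀ _ h_pos.ne']
  calc ∫⁻ x, ENNReal.ofReal (nFunction φ (F x)) ∂μ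
      = ∫⁻ t in Ioi 0, μ {x | t < F x} * ENNReal.ofReal (φ t) :=
        lintegral_ofReal_nFunction_eq_lintegral_meas_lt hφ hφ₀ hF hF₀
    _ ≤ ∫⁻ t in Ioi 0, A * (ENNReal.ofReal (φ t / t) *
          ∫⁻ y in {y | t < g y}, ENNReal.ofReal (g y) ∂ν) := by
        refine setLIntegral_mono' measurableSet_Ioi fun t (ht : 0 < t) => ?_
        calc μ {x | t < F x} * ENNReal.ofReal (φ t)
            = ENNReal.ofReal (φ t / t) * (ENNReal.ofReal t * μ {x | t < F x}) := by
              rw [← mul_assoc, ← ENNReal.ofReal_mul' ht.le, div_mul_cancel₀ _ ht.ne', mul_comm]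
          _ ≤ ENNReal.ofReal (φ t / t) * (A * ∫⁻ y in {y | t < g y}, ENNReal.ofReal (g y) ∂ν) :=
              mul_le_mul_right (hFg t ht) _
          _ = _ := mul_left_comm _ _ _
    _ = A * ∫⁻ t in Ioi 0, ENNReal.ofReal (φ t / t) *
          ∫⁻ y in {y | t < g y}, ENNReal.ofReal (g y) ∂ν :=
        lintegral_const_mul' _ _ ENNReal.coe_ne_top
    _ = A * ∫⁻ y, ENNReal.ofReal (g y) * (∫⁻ t in Ioo 0 (g y), ENNReal.ofReal (φ t / t)) ∂ν := by
        rw [lintegral_Ioi_mul_setLIntegral_lt hw hg hg.ennreal_ofReal]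
    _ ≤ A * ∫⁻ y, ENNReal.ofReal K * ENNReal.ofReal (nFunction φ (g y)) ∂ν :=
        mul_le_mul_right (lintegral_mono hw_lt) _
    _ = A * (ENNReal.ofReal K * ∫⁻ y, ENNReal.ofReal (nFunction φ (g y)) ∂ν) := by
        rw [lintegral_const_mul' _ _ ENNReal.ofReal_ne_top]

lemma setLIntegral_Ioc_inv {s T : ℝ} (hs : 0 < s) (hsT : s ≤ T) :
    ∫⁻ u in Ioc s T, ENNReal.ofReal u⁻¹ = ENNReal.ofReal (log (T / s)) := by
  rw [← integral_inv_of_pos hs (hs.trans_le hsT), integral_of_le hsT,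
    ofReal_integral_eq_lintegral_ofReal]
  · exact (intervalIntegrable_iff_integrableOn_Ioc_of_le hsT).1 <|
      intervalIntegrable_inv (fun u hu => by
        rw [uIcc_of_le hsT] at hu
        exact (hs.trans_le hu.1).ne') continuousOn_id
  · exact ae_restrict_of_forall_mem measurableSet_Ioc
      fun u hu => inv_nonneg.2 (hs.trans hu.1).le

-- The factor `log (T / s)` is `∫ du / u` over `(s, T]`, on which `φ u ≥ Φ(s) / s`.
theorem le_lintegral_nFunction_of_distribution_ge (hφ : MonotoneOn φ (Ici 0)) (hφ₀ : 0 ≤ φ 0)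
    {F : α → ℝ} (hF : AEMeasurable F μ) (hF₀ : 0 ≤ F) {s T : ℝ} (hs : 0 < s) (hsT : s ≤ T)
    {m : ℝ≥0∞} (hFm : ∀ u ∈ Ioc s T, ENNReal.ofReal (T / u) * m ≤ μ {x | u ≤ F x}) :
    ENNReal.ofReal (T / s * log (T / s) * nFunction φ s) * m
      ≤ ∫⁻ x, ENNReal.ofReal (nFunction φ (F x)) ∂μ := by
  have hT : 0 < T := hs.trans_le hsT
  have hΦ : 0 ≤ nFunction φ s := nFunction_nonneg hφ hφ₀ hs.le
  calc ENNReal.ofReal (T / s * log (T / s) * nFunction φ s) * m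
      = ENNReal.ofReal (T / s * nFunction φ s) * m * ∫⁻ u in Ioc s T, ENNReal.ofReal u⁻¹ := by
        rw [setLIntegral_Ioc_inv hs hsT, mul_right_comm _ m, mul_right_comm (T / s),
          ENNReal.ofReal_mul (by positivity)]
    _ = ∫⁻ u in Ioc s T, ENNReal.ofReal (T / s * nFunction φ s) * m * ENNReal.ofReal u⁻¹ :=
        (lintegral_const_mul _ (by fun_prop)).symm
    _ ≤ ∫⁻ u in Ioc s T, μ {x | u ≤ F x} * ENNReal.ofReal (φ u) := by
        refine setLIntegral_mono' measurableSet_Ioc fun u hu => ?_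
        have hu₀ : 0 < u := hs.trans hu.1
        have hφu : nFunction φ s / s ≤ φ u :=
          (div_le_iff₀' hs).2 (nFunction_le_mul hφ hs.le hu.1.le)
        calc ENNReal.ofReal (T / s * nFunction φ s) * m * ENNReal.ofReal u⁻¹
            = ENNReal.ofReal (T / u) * m * ENNReal.ofReal (nFunction φ s / s) := by
              rw [mul_right_comm, mul_right_comm _ m, ← ENNReal.ofReal_mul (by positivity),
                ← ENNReal.ofReal_mul (by positivity)]
              congr 2
              ring
          _ ≤ μ {x | u ≤ F x} * ENNReal.ofReal (φ u) := by
              gcongr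
              exact hFm u hu
    _ ≤ ∫⁻ u in Ioi 0, μ {x | u ≤ F x} * ENNReal.ofReal (φ u) :=
        lintegral_mono_set fun u hu => hs.trans hu.1
    _ = ∫⁻ x, ENNReal.ofReal (nFunction φ (F x)) ∂μ :=
        (lintegral_ofReal_nFunction_eq_lintegral_meas_le hφ hφ₀ hF hF₀).symm

end Interpolation

/-! ### The maximal function -/

lemma exists_countable_disjoint_ball_enlargement {X : Type*} [PseudoMetricSpace X] {K : Set X}
    (hK : IsCompact K) {𝓑 : Set (X × ℝ)} (hK𝓑 : K ⊆ ⋃ p ∈ 𝓑, ball p.1 p.2) :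
    ∃ 𝓤 ⊆ 𝓑, 𝓤.Countable ∧ 𝓤.PairwiseDisjoint (fun p => ball p.1 p.2) ∧
      K ⊆ ⋃ p ∈ 𝓤, ball p.1 (4 * p.2) := by
  obtain ⟨𝓕, h𝓕𝓑, h𝓕_fin, hK𝓕⟩ := hK.elim_finite_subcover_image (fun _ _ => isOpen_ball) hK𝓑
  obtain ⟨R, hR⟩ := (h𝓕_fin.image Prod.snd).bddAbove
  obtain ⟨𝓤, h𝓤𝓕, h𝓤_disj, h𝓤_cover⟩ := Vitali.exists_disjoint_subfamily_covering_enlargement_ball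
    𝓕 Prod.fst Prod.snd R (fun p hp => hR (mem_image_of_mem _ hp)) 4 (by norm_num)
  refine ⟨𝓤, h𝓤𝓕.trans h𝓕𝓑, (h𝓕_fin.subset h𝓤𝓕).countable, h𝓤_disj,
    hK𝓕.trans <| iUnion₂_subset fun p hp => ?_⟩
  obtain ⟨q, hq, hpq⟩ := h𝓤_cover p hp
  exact hpq.trans (subset_biUnion_of_mem (u := fun q : X × ℝ => ball q.1 (4 * q.2)) hq)

section MaximalFunction

variable {X : Type*} [PseudoMetricSpace X] [MeasurableSpace X] {μ : Measure X} {g h : X → ℝ≥0∞}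
  {a s : ℝ≥0∞}

/-- The uncentred Hardy–Littlewood maximal function of `g` over open balls. -/
noncomputable def maximalFunction (μ : Measure X) (g : X → ℝ≥0∞) (x : X) : ℝ≥0∞ :=
  ⨆ (c) (r : ℝ) (_ : 0 < r) (_ : x ∈ ball c r), ⨍⁻ y in ball c r, g y ∂μ

lemma lt_maximalFunction_iff {x : X} :
    a < maximalFunction μ g x ↔ ∃ c r, 0 < r ∧ x ∈ ball c r ∧ a < ⨍⁻ y in ball c r, g y ∂μ := by
  simp only [maximalFunction, lt_iSup_iff, exists_prop]

lemma laverage_le_maximalFunction {x c : X} {r : ℝ} (hr : 0 < r) (hx : x ∈ ball c r) :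
    ⨍⁻ y in ball c r, g y ∂μ ≤ maximalFunction μ g x :=
  le_iSup₂_of_le c r <| le_iSup₂_of_le hr hx le_rfl

lemma maximalFunction_le (hga : ∀ x, g x ≤ a) (x : X) : maximalFunction μ g x ≤ a :=
  iSup₂_le fun c r => iSup₂_le fun _ _ => by
    rw [setLAverage_eq]
    refine ENNReal.div_le_of_le_mul ?_
    calc ∫⁻ y in ball c r, g y ∂μ ≤ ∫⁻ _ in ball c r, a ∂μ := lintegral_mono hga
      _ = a * μ (ball c r) := setLIntegral_const _ _

lemma maximalFunction_le_add_const (hgh : ∀ x, g x ≤ h x + s) (x : X) :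
    maximalFunction μ g x ≤ maximalFunction μ h x + s :=
  iSup₂_le fun c r => iSup₂_le fun hr hx => by
    calc ⨍⁻ y in ball c r, g y ∂μ ≤ (∫⁻ y in ball c r, (h y + s) ∂μ) / μ (ball c r) := by
          rw [setLAverage_eq]
          gcongr with y
          exact hgh y
      _ = ⨍⁻ y in ball c r, h y ∂μ + s * μ (ball c r) / μ (ball c r) := by
          rw [lintegral_add_right _ measurable_const, setLIntegral_const, ENNReal.add_div,
            setLAverage_eq]
      _ ≤ maximalFunction μ h x + s :=
          add_le_add (laverage_le_maximalFunction hr hx) (ENNReal.div_le_of_le_mul le_rfl)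

lemma isOpen_lt_maximalFunction : IsOpen {x | a < maximalFunction μ g x} := by
  refine isOpen_iff_mem_nhds.2 fun x hx => ?_
  obtain ⟨c, r, hr, hxc, ha⟩ := lt_maximalFunction_iff.1 hx
  exact mem_of_superset (isOpen_ball.mem_nhds hxc) fun y hy =>
    lt_maximalFunction_iff.2 ⟨c, r, hr, hy, ha⟩

variable [OpensMeasurableSpace X]

lemma measurable_maximalFunction : Measurable (maximalFunction μ g) :=
  measurable_of_Ioi fun _ => isOpen_lt_maximalFunction.measurableSet

lemma mul_measure_le_of_isCompact_subset {D : ℝ≥0}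
    (hD : ∀ c, ∀ r > 0, μ (ball c (4 * r)) ≤ D * μ (ball c r)) {K : Set X} (hK : IsCompact K)
    (hKg : K ⊆ {x | a < maximalFunction μ g x}) :
    a * μ K ≤ D * ∫⁻ y, g y ∂μ := by
  set 𝓑 : Set (X × ℝ) := {p | 0 < p.2 ∧ a < ⨍⁻ y in ball p.1 p.2, g y ∂μ}
  have hK𝓑 : K ⊆ ⋃ p ∈ 𝓑, ball p.1 p.2 := fun x hx => by
    obtain ⟨c, r, hr, hxc, ha⟩ := lt_maximalFunction_iff.1 (hKg hx)
    exact mem_biUnion (x := (c, r)) ⟨hr, ha⟩ hxc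
  obtain ⟨𝓤, h𝓤𝓑, h𝓤_count, h𝓤_disj, hK𝓤⟩ := exists_countable_disjoint_ball_enlargement hK hK𝓑
  have h_ball : ∀ p : 𝓤, a * μ (ball p.1.1 (4 * p.1.2)) ≤ D * ∫⁻ y in ball p.1.1 p.1.2, g y ∂μ := by
    intro p
    obtain ⟨hr, ha⟩ := h𝓤𝓑 p.2
    rw [setLAverage_eq] at ha
    calc a * μ (ball p.1.1 (4 * p.1.2)) ≤ a * (D * μ (ball p.1.1 p.1.2)) := by
          gcongr
          exact hD _ _ hr
      _ = D * (a * μ (ball p.1.1 p.1.2)) := mul_left_comm _ _ _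
      _ ≤ D * ∫⁻ y in ball p.1.1 p.1.2, g y ∂μ := by
          gcongr
          exact ENNReal.mul_le_of_le_div ha.le
  calc a * μ K ≤ a * ∑' p : 𝓤, μ (ball p.1.1 (4 * p.1.2)) := by
        gcongr
        exact (measure_mono hK𝓤).trans (measure_biUnion_le _ h𝓤_count _)
    _ = ∑' p : 𝓤, a * μ (ball p.1.1 (4 * p.1.2)) := ENNReal.tsum_mul_left.symm
    _ ≤ ∑' p : 𝓤, D * ∫⁻ y in ball p.1.1 p.1.2, g y ∂μ := ENNReal.tsum_le_tsum h_ball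
    _ = D * ∫⁻ y in ⋃ p ∈ 𝓤, ball p.1 p.2, g y ∂μ := by
        rw [ENNReal.tsum_mul_left,
          lintegral_biUnion h𝓤_count (fun _ _ => measurableSet_ball) h𝓤_disj]
    _ ≤ D * ∫⁻ y, g y ∂μ := by
        gcongr
        exact Measure.restrict_le_self

variable [μ.Regular] {D : ℝ≥0}

theorem mul_measure_lt_maximalFunction_le
    (hD : ∀ c, ∀ r > 0, μ (ball c (4 * r)) ≤ D * μ (ball c r)) :
    a * μ {x | a < maximalFunction μ g x} ≤ D * ∫⁻ y, g y ∂μ := by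
  rw [isOpen_lt_maximalFunction.measure_eq_iSup_isCompact]
  simp only [ENNReal.mul_iSup, iSup_le_iff]
  exact fun K hKg hK => mul_measure_le_of_isCompact_subset hD hK hKg

theorem mul_measure_two_mul_lt_maximalFunction_le
    (hD : ∀ c, ∀ r > 0, μ (ball c (4 * r)) ≤ D * μ (ball c r)) :
    s * μ {x | 2 * s < maximalFunction μ g x} ≤ D * ∫⁻ y in {y | s < g y}, g y ∂μ := by
  set h := {y | s < g y}.indicator g
  have hgh : ∀ y, g y ≤ h y + s := by
    intro y
    by_cases hy : s < g y
    · exact (indicator_of_mem (s := {y | s < g y}) hy g).ge.trans le_self_add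
    · exact (not_lt.1 hy).trans le_add_self
  have h_subset : {x | 2 * s < maximalFunction μ g x} ⊆ {x | s < maximalFunction μ h x} := by
    intro x hx
    have h_lt := hx.trans_le (maximalFunction_le_add_const hgh x)
    rw [two_mul] at h_lt
    exact lt_of_add_lt_add_right h_lt
  calc s * μ {x | 2 * s < maximalFunction μ g x} ≤ s * μ {x | s < maximalFunction μ h x} :=
        mul_le_mul_right (measure_mono h_subset) _
    _ ≤ D * ∫⁻ y, h y ∂μ := mul_measure_lt_maximalFunction_le hD
    _ ≤ D * ∫⁻ y in {y | s < g y}, g y ∂μ := mul_le_mul_right (lintegral_indicator_le _ _) _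

theorem lintegral_nFunction_maximalFunction_le [SFinite μ]
    (hD : ∀ c, ∀ r > 0, μ (ball c (4 * r)) ≤ D * μ (ball c r)) {φ : ℝ → ℝ}
    (hφ : MonotoneOn φ (Ici 0)) (hφ₀ : 0 ≤ φ 0) {l : ℝ} (hl : 1 < l)
    (hN : ∀ t ≥ (0 : ℝ), 2 * l * nFunction φ t ≤ nFunction φ (l * t)) {f : X → ℝ}
    (hf : Measurable f) :
    ∫⁻ x, ENNReal.ofReal
        (nFunction φ (1 / 2 * (maximalFunction μ (fun y => ENNReal.ofReal |f y|) x).toReal)) ∂μ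
      ≤ D * (ENNReal.ofReal (2 * l) * ∫⁻ x, ENNReal.ofReal (nFunction φ |f x|) ∂μ) := by
  set Mf := maximalFunction μ fun y => ENNReal.ofReal |f y|
  have h_half : ∀ t > 0, {x | t < 1 / 2 * (Mf x).toReal} ⊆ {x | 2 * ENNReal.ofReal t < Mf x} := by
    intro t ht x (hx : t < 1 / 2 * (Mf x).toReal)
    have h_pos : 0 < (Mf x).toReal := by linarith
    rw [mem_ofPred_eq, ← ENNReal.ofReal_ofNat, ← ENNReal.ofReal_mul zero_le_two,
      ENNReal.ofReal_lt_iff_lt_toReal (by positivity) (ENNReal.toReal_pos_iff.1 h_pos).2.ne]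
    linarith
  have h_level : ∀ t > 0, {y | ENNReal.ofReal t < ENNReal.ofReal |f y|} = {y | t < |f y|} :=
    fun t ht => ext fun y => ENNReal.ofReal_lt_ofReal_iff_of_nonneg ht.le
  refine lintegral_nFunction_le_of_weakType hφ hφ₀
    (measurable_maximalFunction.ennreal_toReal.const_mul _).aemeasurable
    (fun x => by positivity) hf.abs (fun x => abs_nonneg _) (by positivity) (fun t ht => ?_)
    fun t ht => setLIntegral_div_le_of_nablaTwo hφ hφ₀ hl hN ht
  calc ENNReal.ofReal t * μ {x | t < 1 / 2 * (Mf x).toReal}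
      ≤ ENNReal.ofReal t * μ {x | 2 * ENNReal.ofReal t < Mf x} :=
        mul_le_mul_right (measure_mono (h_half t ht)) _
    _ ≤ D * ∫⁻ y in {y | t < |f y|}, ENNReal.ofReal |f y| ∂μ := by
        rw [← h_level t ht]
        exact mul_measure_two_mul_lt_maximalFunction_le hD

end MaximalFunction

/-! ### The maximal inequality on finite-dimensional normed spaces -/

lemma lintegral_ofReal_comp_abs_indicator {α : Type*} [MeasurableSpace α] {μ : Measure α}
    {Φ : ℝ → ℝ} (hΦ : Φ 0 = 0) {s : Set α} (hs : MeasurableSet s) {t : ℝ} (ht : 0 ≤ t) :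
    ∫⁻ x, ENNReal.ofReal (Φ |s.indicator (fun _ => t) x|) ∂μ = ENNReal.ofReal (Φ t) * μ s := by
  rw [← lintegral_indicator_const hs]
  refine lintegral_congr fun x => ?_
  by_cases hx : x ∈ s <;> simp [hx, hΦ, abs_of_nonneg ht]

section NormedSpace

variable {E : Type*} [NormedAddCommGroup E] [NormedSpace ℝ E] [FiniteDimensional ℝ E]
  [MeasurableSpace E] [BorelSpace E] {μ : Measure E} [μ.IsAddHaarMeasure] {φ : ℝ → ℝ}

open Module (finrank)

lemma addHaar_ball_four_mul_le (c : E) (r : ℝ) :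
    μ (ball c (4 * r)) ≤ ((4 ^ finrank ℝ E : ℝ≥0) : ℝ≥0∞) * μ (ball c r) := by
  rw [Measure.addHaar_ball_mul_of_pos μ c four_pos, Measure.addHaar_ball_center μ c r,
    ENNReal.ofReal_pow zero_le_four, ENNReal.ofReal_ofNat]
  simp

-- The average over the ball of measure `τ * μ (ball 0 1)` centred at the origin is `a / τ`.
lemma ofReal_mul_measure_ball_le_of_indicator [Nontrivial E] (a : ℝ≥0∞) {τ : ℝ} (hτ : 1 ≤ τ) :
    ENNReal.ofReal τ * μ (ball 0 1) ≤ μ {x | a / ENNReal.ofReal τ ≤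
      maximalFunction μ ((ball (0 : E) 1).indicator fun _ => a) x} := by
  set R : ℝ := τ ^ (finrank ℝ E : ℝ)⁻¹
  have hR : 1 ≤ R := one_le_rpow hτ (by positivity)
  have hR_pow : R ^ finrank ℝ E = τ :=
    rpow_inv_natCast_pow (by positivity) Module.finrank_pos.ne'
  have h_ball : μ (ball 0 R) = ENNReal.ofReal τ * μ (ball 0 1) := by
    rw [Measure.addHaar_ball_of_pos μ _ (by positivity), hR_pow]
  have h_average :
      ⨍⁻ y in ball 0 R, (ball (0 : E) 1).indicator (fun _ => a) y ∂μ = a / ENNReal.ofReal τ := by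
    rw [setLAverage_eq, h_ball, setLIntegral_indicator measurableSet_ball,
      inter_eq_left.2 (ball_subset_ball hR), setLIntegral_const,
      ENNReal.mul_div_mul_right _ _ (measure_ball_pos μ _ one_pos).ne' measure_ball_lt_top.ne]
  rw [← h_ball, ← h_average]
  exact measure_mono fun x hx => laverage_le_maximalFunction (by positivity) hx

theorem mul_log_mul_nFunction_le_of_maximal_indicator_le [Nontrivial E]
    (hφ : MonotoneOn φ (Ici 0)) (hφ₀ : 0 ≤ φ 0) {C b l s : ℝ} (hC : 0 ≤ C) (hb : 0 < b)
    (hbl : 1 ≤ b * l) (hs : 0 < s)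
    (H : ∫⁻ x, ENNReal.ofReal (nFunction φ (b * (maximalFunction μ
        ((ball (0 : E) 1).indicator fun _ => ENNReal.ofReal (l * s)) x).toReal)) ∂μ
      ≤ ENNReal.ofReal C * (ENNReal.ofReal (nFunction φ (l * s)) * μ (ball 0 1))) :
    b * l * log (b * l) * nFunction φ s ≤ C * nFunction φ (l * s) := by
  have hl : 0 < l := pos_of_mul_pos_right (one_pos.trans_le hbl) hb.le
  set Mf := maximalFunction μ ((ball (0 : E) 1).indicator fun _ => ENNReal.ofReal (l * s))
  have hMf_top : ∀ x, Mf x ≠ ⊤ := fun x => ne_top_of_le_ne_top ENNReal.ofReal_ne_top <|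
    maximalFunction_le (fun _ => indicator_le_self' (fun _ _ => zero_le) _) x
  have h_distribution : ∀ u ∈ Ioc s (b * l * s),
      ENNReal.ofReal (b * l * s / u) * μ (ball 0 1) ≤ μ {x | u ≤ b * (Mf x).toReal} := by
    intro u hu
    have hu₀ : 0 < u := hs.trans hu.1
    refine (ofReal_mul_measure_ball_le_of_indicator (ENNReal.ofReal (l * s))
      ((one_le_div hu₀).2 hu.2)).trans (measure_mono fun x hx => ?_)
    rw [mem_ofPred_eq, ← ENNReal.ofReal_div_of_pos (by positivity),
      ENNReal.ofReal_le_iff_le_toReal (hMf_top x)] at hx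
    calc u = b * (l * s / (b * l * s / u)) := by field_simp
      _ ≤ b * (Mf x).toReal := by gcongr
  have h_modular := (le_lintegral_nFunction_of_distribution_ge hφ hφ₀
    (measurable_maximalFunction.ennreal_toReal.const_mul b).aemeasurable
    (fun x => by positivity) hs (le_mul_of_one_le_left hs.le hbl) h_distribution).trans H
  rw [mul_div_cancel_right₀ _ hs.ne', ← mul_assoc, ← ENNReal.ofReal_mul hC,
    ENNReal.mul_le_mul_iff_left (measure_ball_pos μ _ one_pos).ne'
      measure_ball_lt_top.ne] at h_modular
  exact (ENNReal.ofReal_le_ofReal_iff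
    (mul_nonneg hC (nFunction_nonneg hφ hφ₀ (by positivity)))).1 h_modular

theorem nablaTwo_of_maximal_indicator_le [Nontrivial E] (hφ : MonotoneOn φ (Ici 0))
    (hφ₀ : 0 ≤ φ 0) {C b : ℝ} (hC : 0 < C) (hb : 0 < b)
    (H : ∀ t ≥ (0 : ℝ), ∫⁻ x, ENNReal.ofReal (nFunction φ (b * (maximalFunction μ
        ((ball (0 : E) 1).indicator fun _ => ENNReal.ofReal t) x).toReal)) ∂μ
      ≤ ENNReal.ofReal C * (ENNReal.ofReal (nFunction φ t) * μ (ball 0 1))) :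
    NablaTwo (nFunction φ) := by
  obtain ⟨l, hl, hbl⟩ : ∃ l : ℝ, 1 < l ∧ exp (2 * C / b) ≤ b * l :=
    ⟨max 2 (exp (2 * C / b) / b), by simp, (div_le_iff₀' hb).1 (le_max_right _ _)⟩
  have h_exp : 1 ≤ exp (2 * C / b) := one_le_exp (by positivity)
  have h_log : 2 * C / b ≤ log (b * l) := (le_log_iff_exp_le (by positivity)).2 hbl
  refine ⟨l, hl, fun s hs => ?_⟩
  rcases hs.eq_or_lt with rfl | hs
  · simp [nFunction_zero]
  have hΦ : 0 ≤ nFunction φ s := nFunction_nonneg hφ hφ₀ hs.le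
  refine le_of_mul_le_mul_left ?_ hC
  calc C * (2 * l * nFunction φ s) = b * l * (2 * C / b) * nFunction φ s := by field_simp
    _ ≤ b * l * log (b * l) * nFunction φ s := by gcongr
    _ ≤ C * nFunction φ (l * s) :=
        mul_log_mul_nFunction_le_of_maximal_indicator_le hφ hφ₀ hC.le hb (h_exp.trans hbl) hs
          (H _ (by positivity))

theorem stmt_18_general [Nontrivial E] (hφ : MonotoneOn φ (Ici 0)) (hφ₀ : 0 ≤ φ 0)
    (hφ_top : Tendsto φ atTop atTop) :
    (∃ C > (0 : ℝ), ∃ b > (0 : ℝ), ∀ f : E → ℝ, Measurable f →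
      (∃ a > (0 : ℝ), ∫⁻ x, ENNReal.ofReal (nFunction φ (a * |f x|)) ∂μ < ⊤) →
      ∫⁻ x, ENNReal.ofReal
          (nFunction φ (b * (maximalFunction μ (fun y => ENNReal.ofReal |f y|) x).toReal)) ∂μ
        ≤ ENNReal.ofReal C * ∫⁻ x, ENNReal.ofReal (nFunction φ |f x|) ∂μ) ↔
      DeltaTwo (nFunction (complementaryDensity φ)) := by
  rw [deltaTwo_iff_nablaTwo_nFunction hφ hφ₀ hφ_top]
  constructor
  · rintro ⟨C, hC, b, hb, H⟩
    refine nablaTwo_of_maximal_indicator_le (μ := μ) hφ hφ₀ hC hb fun t ht => ?_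
    set f : E → ℝ := (ball 0 1).indicator fun _ => t
    have hf : (fun y => ENNReal.ofReal |f y|) =
        (ball (0 : E) 1).indicator fun _ => ENNReal.ofReal t := by
      ext y
      by_cases hy : y ∈ ball (0 : E) 1 <;> simp [f, hy, abs_of_nonneg ht]
    have h_modular : ∫⁻ x, ENNReal.ofReal (nFunction φ |f x|) ∂μ
        = ENNReal.ofReal (nFunction φ t) * μ (ball 0 1) :=
      lintegral_ofReal_comp_abs_indicator nFunction_zero measurableSet_ball ht
    rw [← h_modular, ← hf]
    refine H f (measurable_const.indicator measurableSet_ball) ⟨1, one_pos, ?_⟩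
    simpa only [one_mul, h_modular] using
      ENNReal.mul_lt_top ENNReal.ofReal_lt_top measure_ball_lt_top
  · rintro ⟨l, hl, hN⟩
    refine ⟨(4 ^ finrank ℝ E : ℝ≥0) * (2 * l), by positivity, 1 / 2, by norm_num, fun f hf _ => ?_⟩
    refine (lintegral_nFunction_maximalFunction_le (fun c r _ => addHaar_ball_four_mul_le c r)
      hφ hφ₀ hl hN hf).trans_eq ?_
    rw [← mul_assoc, ENNReal.ofReal_mul NNReal.zero_le_coe, ENNReal.ofReal_coe_nnreal]

end NormedSpace

/-- Maximal-function characterization of the `Δ₂`-condition for the complementary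
`N`-function (Gallardo). Here `Φ(t) = ∫_0^t φd(s) ds` is an `N`-function with density `φd`
(increasing, right-continuous, `φd(0) = 0`, `φd(t) → ∞`), `ψd(t) = sup{s ≥ 0 : φd(s) ≤ t}`
and `Ψ(t) = ∫_0^t ψd(s) ds` is the complementary `N`-function, and
`M f x = sup_{B ∋ x} ⨍_B |f|` is the Hardy–Littlewood maximal function over balls in `ℝⁿ`.
The maximal inequality `∫ Φ(b M_f) ≤ C ∫ Φ(|f|)` holds for all `f ∈ L*_Φ` iff `Ψ`
satisfies the `Δ₂`-condition. -/
theorem stmt_18 (n : ℕ) (hn : 1 ≤ n)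
    (φd ψd Φ Ψ : ℝ → ℝ)
    (hφd_mono : MonotoneOn φd (Set.Ici 0))
    (hφd_rc : ∀ t ≥ (0:ℝ), ContinuousWithinAt φd (Set.Ici t) t)
    (hφd0 : φd 0 = 0)
    (hφd_top : Filter.Tendsto φd Filter.atTop Filter.atTop)
    (hΦ : ∀ t, Φ t = ∫ s in (0:ℝ)..t, φd s)
    (hψd : ∀ t, ψd t = sSup {s : ℝ | 0 ≤ s ∧ φd s ≤ t})
    (hΨ : ∀ t, Ψ t = ∫ s in (0:ℝ)..t, ψd s)
    (M : (EuclideanSpace ℝ (Fin n) → ℝ) → EuclideanSpace ℝ (Fin n) → ENNReal)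
    (hM : ∀ f x, M f x =
      ⨆ (c : EuclideanSpace ℝ (Fin n)) (r : ℝ) (_ : 0 < r) (_ : x ∈ Metric.ball c r),
        (volume (Metric.ball c r))⁻¹ * ∫⁻ y in Metric.ball c r, ENNReal.ofReal |f y|) :
    (∃ C > (0:ℝ), ∃ b > (0:ℝ), ∀ f : EuclideanSpace ℝ (Fin n) → ℝ, Measurable f →
      (∃ a > (0:ℝ), ∫⁻ x, ENNReal.ofReal (Φ (a * |f x|)) < ⊤) →
      ∫⁻ x, ENNReal.ofReal (Φ (b * (M f x).toReal))
        ≤ ENNReal.ofReal C * ∫⁻ x, ENNReal.ofReal (Φ |f x|))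
    ↔ (∃ CΨ > (0:ℝ), ∀ t ≥ (0:ℝ), Ψ (2 * t) ≤ CΨ * Ψ t) := by
  obtain rfl : Φ = nFunction φd := funext hΦ
  obtain rfl : ψd = complementaryDensity φd := funext hψd
  obtain rfl : Ψ = nFunction (complementaryDensity φd) := funext hΨ
  obtain rfl : M = fun f => maximalFunction volume fun y => ENNReal.ofReal |f y| := by
    ext f x
    simp only [hM, maximalFunction, setLAverage_eq, ENNReal.div_eq_inv_mul]
  have : Nonempty (Fin n) := ⟨⟨0, hn⟩⟩
  exact stmt_18_general hφd_mono hφd0.ge hφd_top
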